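/- Let p_1, p_2, p_3, p_4 be four distinct points of P^2 with no three of them collinear, and let Z = 2p_1 + p_2 + p_3 + p_4 be the fat points scheme with a double point at p_1 and simple points at p_2, p_3, p_4. Then the Waldschmidt constant satisfies α̂(I(Z)) ≥ 5/2. -/

import Mathlib

noncomputable section

open MvPolynomial

/-- `alpha J` is the least degree of a nonzero homogeneous form in the ideal `J`. -/
def alpha {kk : Type*} [Field kk] {σ : Type*} (J : Ideal (MvPolynomial σ kk)) : ℕ :=
  sInf {d : ℕ | ∃ f ∈ J, f ≠ 0 ∧ MvPolynomial.IsHomogeneous f d}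

/-- The homogeneous (prime) ideal of the point of `ℙ²` represented by the nonzero vector
`p`, generated by the linear forms vanishing at `p`. -/
def pointIdeal {kk : Type*} [Field kk] (p : Fin 3 → kk) : Ideal (MvPolynomial (Fin 3) kk) :=
  Ideal.span {f | f.IsHomogeneous 1 ∧ MvPolynomial.eval p f = 0}

/-- Two nonzero vectors represent the same point of `ℙ²`. -/
def projEq {kk : Type*} [Field kk] (p q : Fin 3 → kk) : Prop :=
  ∃ c : kk, c ≠ 0 ∧ q = c • p

lemma aux_eval_smul {kk : Type*} [Field kk] {F : MvPolynomial (Fin 3) kk} {d : ℕ}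
    (hF : F.IsHomogeneous d) (s : kk) (q : Fin 3 → kk) :
    eval (s • q) F = s ^ d * eval q F := by
  rw [eval_eq, eval_eq, Finset.mul_sum]
  refine Finset.sum_congr rfl fun m hm => ?_
  have h : ∑ i ∈ m.support, m i = d := by
    have := hF (mem_support_iff.1 hm)
    rw [Finsupp.weight_apply] at this
    simpa [Finsupp.sum] using this
  simp only [Pi.smul_apply, smul_eq_mul, mul_pow, Finset.prod_mul_distrib,
    Finset.prod_pow_eq_pow_sum, h]
  ring

lemma aux_linear {kk : Type*} [Field kk] {F : MvPolynomial (Fin 3) kk}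
    (hF : F.IsHomogeneous 1) : ∃ a : Fin 3 → kk, F = ∑ j, C (a j) * X j := by
  have h : F ∈ homogeneousSubmodule (Fin 3) kk 1 := hF
  rw [homogeneousSubmodule_one_eq_span_X, Submodule.mem_span_range_iff_exists_fun] at h
  obtain ⟨a, rfl⟩ := h
  exact ⟨a, by simp [smul_eq_C_mul]⟩

lemma aux_form {kk : Type*} [Field kk] (v : Fin 3 → kk) (hv : v ≠ 0) :
    (∑ j, C (v j) * X j : MvPolynomial (Fin 3) kk) ≠ 0 ∧
    (∑ j, C (v j) * X j : MvPolynomial (Fin 3) kk).IsHomogeneous 1 := by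
  constructor
  · intro h
    apply hv
    ext i
    have := congrArg (eval (Pi.single i 1)) h
    simpa [Pi.single_apply] using this
  · refine IsHomogeneous.sum _ _ _ fun j _ => ?_
    simpa using (isHomogeneous_C (Fin 3) (v j)).mul (isHomogeneous_X kk j)

lemma aux_exists_form {kk : Type*} [Field kk] (p : Fin 3 → kk) :
    ∃ l : MvPolynomial (Fin 3) kk, l ≠ 0 ∧ l.IsHomogeneous 1 ∧ l ∈ pointIdeal p := by
  obtain ⟨v, hv, h⟩ : ∃ v : Fin 3 → kk, v ≠ 0 ∧ ∑ j, v j * p j = 0 := by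
    by_cases h : p 0 = 0
    · refine ⟨![1, 0, 0], fun h => by simpa using congrFun h 0, by simp [Fin.sum_univ_three, h]⟩
    · refine ⟨![p 1, - p 0, 0], fun h' => h (by simpa using congrFun h' 1), ?_⟩
      simp [Fin.sum_univ_three]; ring
  refine ⟨_, (aux_form v hv).1, (aux_form v hv).2, Ideal.subset_span ⟨(aux_form v hv).2, ?_⟩⟩
  simpa using h

lemma aux_dvd {kk : Type*} [Field kk] (p : Fin 3 → kk) (φ : Fin 3 → Polynomial kk)
    (A : Polynomial kk)
    (h : ∀ a : Fin 3 → kk, ∑ j, a j * p j = 0 → A ∣ ∑ j, Polynomial.C (a j) * φ j)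
    (m : ℕ) (F : MvPolynomial (Fin 3) kk) (hF : F ∈ pointIdeal p ^ m) :
    A ^ m ∣ aeval φ F := by
  have h1 : Ideal.map (aeval φ) (pointIdeal p) ≤ Ideal.span {A} := by
    rw [pointIdeal, Ideal.map_span, Ideal.span_le]
    rintro _ ⟨f, ⟨hf, hf0⟩, rfl⟩
    obtain ⟨a, rfl⟩ := aux_linear hf
    rw [SetLike.mem_coe, Ideal.mem_span_singleton]
    have := h a (by simpa using hf0)
    simpa [Polynomial.algebraMap_eq] using this
  have h2 := Ideal.mem_map_of_mem (aeval φ) hF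
  rw [Ideal.map_pow] at h2
  have h3 := Ideal.pow_right_mono h1 m h2
  rwa [Ideal.span_singleton_pow, Ideal.mem_span_singleton] at h3

lemma aux_generic {kk : Type*} [Field kk] [Infinite kk] (H : MvPolynomial (Fin 3) kk)
    (hH : H ≠ 0) : ∃ y : Fin 3 → kk, eval y H ≠ 0 ∧ (∀ i, y i ≠ 0) ∧ (∀ i, y i ≠ 1) ∧
      y 0 ≠ y 1 ∧ y 0 ≠ y 2 ∧ y 1 ≠ y 2 := by
  have hX : ∀ i, (X i : MvPolynomial (Fin 3) kk) ≠ 0 := fun i => X_ne_zero i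
  have hX1 : ∀ i, (X i - 1 : MvPolynomial (Fin 3) kk) ≠ 0 := fun i h => by
    simpa using congrArg (eval 0) h
  have hXX : ∀ i j, i ≠ j → (X i - X j : MvPolynomial (Fin 3) kk) ≠ 0 := fun i j hij h =>
    hij (X_injective (sub_eq_zero.1 h))
  have hP : H * (∏ i, X i) * (∏ i, (X i - 1)) * ((X 0 - X 1) * (X 0 - X 2) * (X 1 - X 2)) ≠ 0 := by
    refine mul_ne_zero (mul_ne_zero (mul_ne_zero hH ?_) ?_) (mul_ne_zero (mul_ne_zero ?_ ?_) ?_)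
    · exact Finset.prod_ne_zero_iff.2 fun i _ => hX i
    · exact Finset.prod_ne_zero_iff.2 fun i _ => hX1 i
    all_goals exact hXX _ _ (by decide)
  obtain ⟨y, hy⟩ : ∃ y, eval y (H * (∏ i, X i) * (∏ i, (X i - 1)) *
      ((X 0 - X 1) * (X 0 - X 2) * (X 1 - X 2))) ≠ 0 := by
    by_contra! h
    exact hP (MvPolynomial.funext fun x => by rw [h x, map_zero])
  refine ⟨y, ?_⟩
  simp only [map_mul, map_prod, map_sub, eval_X, map_one, mul_ne_zero_iff,
    Finset.prod_ne_zero_iff, sub_ne_zero, Finset.mem_univ, true_imp_iff] at hy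
  tauto

lemma aux_coprime {kk : Type*} [Field kk] (u v : kk) (h : u ≠ v) :
    IsCoprime (1 + Polynomial.C u * Polynomial.X) (1 + Polynomial.C v * Polynomial.X) := by
  have h' : v - u ≠ 0 := sub_ne_zero.2 h.symm
  refine ⟨Polynomial.C (v / (v - u)), Polynomial.C (- u / (v - u)), ?_⟩
  have e1 : v / (v - u) + - u / (v - u) = 1 := by field_simp; ring
  have e2 : v / (v - u) * u + - u / (v - u) * v = 0 := by field_simp; ring
  have f1 := congrArg (Polynomial.C (R := kk)) e1
  have f2 := congrArg (Polynomial.C (R := kk)) e2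
  simp only [map_add, map_mul, map_one, map_zero] at f1 f2
  linear_combination f1 + Polynomial.X * f2

lemma aux_coprimeX {kk : Type*} [Field kk] (u : kk) :
    IsCoprime Polynomial.X (1 + Polynomial.C u * Polynomial.X) :=
  ⟨- Polynomial.C u, 1, by ring⟩

lemma aux_natDegree {kk : Type*} [Field kk] (u : kk) (hu : u ≠ 0) :
    (1 + Polynomial.C u * Polynomial.X : Polynomial kk).natDegree = 1 := by
  rw [add_comm, ← Polynomial.C_1]
  exact Polynomial.natDegree_linear hu

/-- The main degree bound, with `p 0 = ∑ c i • q i`. -/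
lemma aux_main {kk : Type*} [Field kk] [Infinite kk] (q : Fin 3 → Fin 3 → kk) (p0 : Fin 3 → kk)
    (c : Fin 3 → kk) (hc : ∀ i, c i ≠ 0) (hp0 : ∀ j, p0 j = ∑ i, c i * q i j)
    (hspan : ∀ x : Fin 3 → kk, ∃ b : Fin 3 → kk, ∀ j, x j = ∑ i, b i * q i j)
    (k d : ℕ) (F : MvPolynomial (Fin 3) kk) (hF0 : F ≠ 0) (hF : F.IsHomogeneous d)
    (h0 : F ∈ pointIdeal p0 ^ (2 * k)) (hi : ∀ i, F ∈ pointIdeal (q i) ^ k) :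
    5 * k ≤ 2 * d := by
  -- generic point
  let H : MvPolynomial (Fin 3) kk := aeval (fun j => ∑ i, C (c i * q i j) * X i) F
  have hHe : ∀ y : Fin 3 → kk, eval y H = eval (fun j => ∑ i, c i * q i j * y i) F := by
    intro y
    have : (aeval y : MvPolynomial (Fin 3) kk →ₐ[kk] kk).comp
        (aeval (fun j => ∑ i, C (c i * q i j) * X i)) =
        aeval (fun j => ∑ i, c i * q i j * y i) := by
      ext j; simp
    simpa [H, aeval_eq_eval] using DFunLike.congr_fun this F
  have hH : H ≠ 0 := by
    intro h
    apply hF0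
    refine MvPolynomial.funext fun x => ?_
    obtain ⟨b, hb⟩ := hspan x
    have := hHe (fun i => b i / c i)
    rw [h, map_zero] at this
    rw [map_zero, this]
    congr 1
    congr 1
    ext j
    rw [hb]
    refine Finset.sum_congr rfl fun i _ => ?_
    have := hc i
    field_simp
  obtain ⟨y, hyH, hy0, hy1, h01, h02, h12⟩ := aux_generic H hH
  rw [hHe] at hyH
  let u : Fin 3 → kk := fun i => (y i)⁻¹ - 1
  have hu : ∀ i, u i ≠ 0 := fun i h => hy1 i (by simpa [u, sub_eq_zero] using h)
  have huu : ∀ i j, y i ≠ y j → u i ≠ u j := fun i j h h' => h (by simpa [u] using h')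
  let A : Fin 3 → Polynomial kk := fun i => 1 + Polynomial.C (u i) * Polynomial.X
  have hAdeg : ∀ i, (A i).natDegree = 1 := fun i => aux_natDegree _ (hu i)
  let B : Fin 3 → Polynomial kk := ![A 1 * A 2, A 0 * A 2, A 0 * A 1]
  let φ : Fin 3 → Polynomial kk := fun j => ∑ i, Polynomial.C (c i * q i j) * B i
  have hφdeg : ∀ j, (φ j).natDegree ≤ 2 := by
    intro j
    refine Polynomial.natDegree_sum_le_of_forall_le _ _ fun i _ => ?_
    refine (Polynomial.natDegree_C_mul_le _ _).trans ?_
    fin_cases i <;> refine Polynomial.natDegree_mul_le.trans ?_ <;> simp [hAdeg]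
  have hdeg : (aeval φ F).natDegree ≤ d * 2 :=
    aeval_natDegree_le F hF.totalDegree_le φ hφdeg
  have hA1 : ∀ i, (A i).eval 1 = (y i)⁻¹ := fun i => by simp [A, u]
  have hφ1 : (fun j => (φ j).eval 1) =
      (y 0 * y 1 * y 2)⁻¹ • fun j => ∑ i, c i * q i j * y i := by
    ext j
    have a0 := hy0 0
    have a1 := hy0 1
    have a2 := hy0 2
    simp [φ, B, Fin.sum_univ_three, hA1]
    field_simp
  have hne : aeval φ F ≠ 0 := by
    intro h
    have e : (aeval φ F).eval 1 = eval (fun j => (φ j).eval 1) F := by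
      have : (Polynomial.aeval (1 : kk)).comp (aeval φ) =
          (aeval (fun j => (φ j).eval 1) : MvPolynomial (Fin 3) kk →ₐ[kk] kk) := by
        ext j; simp [Polynomial.aeval_def, Polynomial.eval₂_eq_eval_map]
      have := DFunLike.congr_fun this F
      simpa [aeval_eq_eval, Polynomial.coe_aeval_eq_eval] using this
    rw [h, hφ1, aux_eval_smul hF] at e
    simp only [Polynomial.eval_zero] at e
    have := mul_ne_zero (pow_ne_zero d (inv_ne_zero
      (mul_ne_zero (mul_ne_zero (hy0 0) (hy0 1)) (hy0 2)))) hyH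
    exact this e.symm
  have d0 : Polynomial.X ^ (2 * k) ∣ aeval φ F := by
    refine aux_dvd p0 φ _ (fun a ha => ?_) _ F h0
    rw [Polynomial.X_dvd_iff, Polynomial.coeff_zero_eq_eval_zero]
    refine Eq.trans ?_ ha
    simp only [Polynomial.eval_finsetSum, Polynomial.eval_mul, Polynomial.eval_C, φ, hp0]
    refine Finset.sum_congr rfl fun j _ => ?_
    simp [Fin.sum_univ_three, B, A]
  have di : ∀ i, A i ^ k ∣ aeval φ F := by
    intro i
    refine aux_dvd (q i) φ _ (fun a ha => ?_) _ F (hi i)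
    have hsw : ∑ j, Polynomial.C (a j) * φ j =
        ∑ l, Polynomial.C (c l * ∑ j, a j * q l j) * B l := by
      simp only [φ, Finset.mul_sum, map_sum, Finset.sum_mul]
      rw [Finset.sum_comm]
      refine Finset.sum_congr rfl fun l _ => Finset.sum_congr rfl fun j _ => ?_
      simp only [map_mul]; ring
    rw [hsw]
    refine Finset.dvd_sum fun l _ => ?_
    by_cases hl : l = i
    · subst hl; simp [ha]
    · refine Dvd.dvd.mul_left ?_ _
      fin_cases i <;> fin_cases l <;> simp [B] at hl ⊢
  have c01 : IsCoprime (A 0) (A 1) := aux_coprime _ _ (huu _ _ h01)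
  have c02 : IsCoprime (A 0) (A 2) := aux_coprime _ _ (huu _ _ h02)
  have c12 : IsCoprime (A 1) (A 2) := aux_coprime _ _ (huu _ _ h12)
  have cX : ∀ i, IsCoprime Polynomial.X (A i) := fun i => aux_coprimeX _
  have D1 := (c01.pow (m := k) (n := k)).mul_dvd (di 0) (di 1)
  have D2 := ((c02.pow (m := k) (n := k)).mul_left (c12.pow (m := k) (n := k))).mul_dvd D1 (di 2)
  have D3 := IsCoprime.mul_dvd (((cX 0).pow (m := 2 * k) (n := k)).mul_right
    ((cX 1).pow (n := k)) |>.mul_right ((cX 2).pow (n := k))) d0 D2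
  have := Polynomial.natDegree_le_of_dvd D3 hne
  have hA0 : ∀ i, A i ≠ 0 := fun i h => by have := hAdeg i; simp [h] at this
  rw [Polynomial.natDegree_mul, Polynomial.natDegree_mul, Polynomial.natDegree_mul] at this
  · simp only [Polynomial.natDegree_pow, hAdeg, Polynomial.natDegree_X] at this
    omega
  all_goals simp [hA0]

/-- Let `p 0, p 1, p 2, p 3` be four distinct points of `ℙ²` with no three
of them collinear, and let `Z = 2·p 0 + p 1 + p 2 + p 3` be the fat points scheme with a
double point at `p 0` and simple points elsewhere.  Then `α̂(I(Z)) ≥ 5/2`. -/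
theorem waldschmidt_ge_of_general_position
    {kk : Type*} [Field kk] [IsAlgClosed kk]
    (p : Fin 4 → (Fin 3 → kk)) (hp0 : ∀ i, p i ≠ 0)
    (hdist : ∀ i j, i ≠ j → ¬ projEq (p i) (p j))
    (hncol : ∀ i j l : Fin 4, i ≠ j → i ≠ l → j ≠ l →
      ¬ ∃ g : MvPolynomial (Fin 3) kk, g ≠ 0 ∧ g.IsHomogeneous 1 ∧
        MvPolynomial.eval (p i) g = 0 ∧ MvPolynomial.eval (p j) g = 0 ∧
        MvPolynomial.eval (p l) g = 0) :
    (⨅ k : ℕ+, (alpha (⨅ i : Fin 4,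
        pointIdeal (p i) ^ ((k : ℕ) * ![2, 1, 1, 1] i)) : ℝ) / ((k : ℕ) : ℝ)) ≥ 5 / 2 := by
  haveI : Infinite kk := IsAlgClosed.instInfinite
  -- coordinates
  let M : Matrix (Fin 3) (Fin 3) kk := Matrix.of fun i => p i.succ
  have hform : ∀ v : Fin 3 → kk, v ≠ 0 → ∀ i j l : Fin 4, i ≠ j → i ≠ l → j ≠ l →
      ∑ t, v t * p i t = 0 → ∑ t, v t * p j t = 0 → ∑ t, v t * p l t = 0 → False := by
    intro v hv i j l hij hil hjl h1 h2 h3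
    exact hncol i j l hij hil hjl ⟨_, (aux_form v hv).1, (aux_form v hv).2, by simpa using h1,
      by simpa using h2, by simpa using h3⟩
  have hM : M.det ≠ 0 := by
    intro h
    obtain ⟨v, hv, h⟩ := Matrix.exists_mulVec_eq_zero_iff.2 h
    have h' : ∀ i : Fin 3, ∑ t, v t * p i.succ t = 0 := fun i => by
      have := congrFun h i
      simpa [M, Matrix.mulVec, dotProduct, mul_comm] using this
    exact hform v hv 1 2 3 (by decide) (by decide) (by decide) (h' 0) (h' 1) (h' 2)
  have hMu : IsUnit M.det := isUnit_iff_ne_zero.2 hM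
  have hspan : ∀ x : Fin 3 → kk, ∃ b : Fin 3 → kk, ∀ j, x j = ∑ i, b i * p i.succ j := by
    intro x
    refine ⟨Matrix.vecMul x M⁻¹, fun j => ?_⟩
    have : Matrix.vecMul (Matrix.vecMul x M⁻¹) M = x := by
      rw [Matrix.vecMul_vecMul, Matrix.nonsing_inv_mul _ hMu, Matrix.vecMul_one]
    conv_lhs => rw [← this]
    rfl
  obtain ⟨c, hcp⟩ := hspan (p 0)
  have hc : ∀ i, c i ≠ 0 := by
    intro i hci
    let v := Matrix.mulVec M⁻¹ (Pi.single i 1)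
    have hv : Matrix.mulVec M v = Pi.single i 1 := by
      rw [Matrix.mulVec_mulVec, Matrix.mul_nonsing_inv _ hMu, Matrix.one_mulVec]
    have hv' : ∀ l : Fin 3, ∑ t, v t * p l.succ t = (Pi.single i 1 : Fin 3 → kk) l := fun l => by
      rw [← hv]
      simp [M, Matrix.mulVec, dotProduct, mul_comm]
    have hv0 : v ≠ 0 := by
      intro h
      have := hv' i
      simp [h] at this
    have hvp : ∑ t, v t * p 0 t = 0 := by
      have : ∑ t, v t * p 0 t = ∑ l, c l * ∑ t, v t * p l.succ t := by
        simp only [hcp, Finset.mul_sum]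
        rw [Finset.sum_comm]
        refine Finset.sum_congr rfl fun l _ => Finset.sum_congr rfl fun j _ => ?_
        ring
      rw [this]
      simp [hv', Pi.single_apply, hci]
    have hz : ∀ l : Fin 3, l ≠ i → ∑ t, v t * p l.succ t = 0 := fun l hl => by
      rw [hv' l]; simp [hl]
    fin_cases i
    · exact hform v hv0 0 2 3 (by decide) (by decide) (by decide) hvp
        (hz 1 (by decide)) (hz 2 (by decide))
    · exact hform v hv0 0 1 3 (by decide) (by decide) (by decide) hvp
        (hz 0 (by decide)) (hz 2 (by decide))
    · exact hform v hv0 0 1 2 (by decide) (by decide) (by decide) hvp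
        (hz 0 (by decide)) (hz 1 (by decide))
  refine le_ciInf fun k => ?_
  have hk : (0 : ℝ) < ((k : ℕ) : ℝ) := by exact_mod_cast k.pos
  rw [le_div_iff₀ hk]
  set J := ⨅ i : Fin 4, pointIdeal (p i) ^ ((k : ℕ) * ![2, 1, 1, 1] i) with hJ
  have hne : {d : ℕ | ∃ f ∈ J, f ≠ 0 ∧ MvPolynomial.IsHomogeneous f d}.Nonempty := by
    choose l hl0 hl1 hlm using fun i => aux_exists_form (p i)
    refine ⟨_, ∏ i, l i ^ ((k : ℕ) * ![2, 1, 1, 1] i), ?_, ?_,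
      IsHomogeneous.prod _ _ _ fun i _ => (hl1 i).pow _⟩
    · rw [hJ, Submodule.mem_iInf]
      intro i
      exact Ideal.mem_of_dvd _ (Finset.dvd_prod_of_mem _ (Finset.mem_univ i))
        (Ideal.pow_mem_pow (hlm i) _)
    · exact Finset.prod_ne_zero_iff.2 fun i _ => pow_ne_zero _ (hl0 i)
  obtain ⟨F, hFJ, hF0, hF⟩ := Nat.sInf_mem hne
  rw [hJ, Submodule.mem_iInf] at hFJ
  have key := aux_main (fun i => p i.succ) (p 0) c hc hcp hspan k (alpha J) F hF0 hF
    (by simpa [mul_comm] using hFJ 0)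
    (by
      intro i
      have := hFJ i.succ
      fin_cases i <;> simpa using this)
  have key' : (5 : ℝ) * ((k : ℕ) : ℝ) ≤ 2 * (alpha J : ℝ) := by exact_mod_cast key
  linarith
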